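/- Let (T_n) be a sequence of subsets of ℝ with accumulating renormalizations, and let (g_n) be a sequence in G = PSL(2,ℂ) with g_n → e and g_n ∉ VH = {vh : v ∈ V, h ∈ H} for all n. Then the set V ∩ limsup_n {u_t g_n h : t ∈ T_n, h ∈ H} accumulates at e and at ∞. -/

import Mathlib

open scoped MatrixGroups
open Matrix Filter

noncomputable section

/-- `SL(2,ℂ)`. -/
abbrev SL2C := Matrix.SpecialLinearGroup (Fin 2) ℂ

instance : TopologicalSpace SL2C := instTopologicalSpaceSubtype

/-- `G = PSL(2,ℂ) = SL(2,ℂ)/{±I}`, with the quotient topology. -/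
abbrev PSL2C := Matrix.ProjectiveSpecialLinearGroup (Fin 2) ℂ

/-- The projection `π : SL(2,ℂ) → PSL(2,ℂ)`. -/
def pr : SL2C →* PSL2C := QuotientGroup.mk' _

/-- The upper triangular unipotent matrix `[[1, t],[0, 1]]` as an element of `SL(2,ℂ)`. -/
def uMat (t : ℂ) : SL2C := ⟨!![1, t; 0, 1], by simp [Matrix.det_fin_two_of]⟩

/-- `u_t = π [[1, t],[0, 1]]` for `t ∈ ℝ`. -/
def uu (t : ℝ) : PSL2C := pr (uMat t)

/-- `v_s = π [[1, is],[0, 1]]` for `s ∈ ℝ`. -/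
def vv (s : ℝ) : PSL2C := pr (uMat (s * Complex.I))

/-- The subgroup `U = {u_t : t ∈ ℝ}` as a subset of `PSL(2,ℂ)`. -/
def Uset : Set PSL2C := Set.range uu

/-- The subgroup `V = {v_s : s ∈ ℝ}` as a subset of `PSL(2,ℂ)`. -/
def Vset : Set PSL2C := Set.range vv

/-- The subgroup `N = {π [[1, z],[0,1]] : z ∈ ℂ}` as a subset of `PSL(2,ℂ)`. -/
def Nset : Set PSL2C := {x | ∃ z : ℂ, x = pr (uMat z)}

/-- `H = π (SL(2,ℝ))`, the image in `PSL(2,ℂ)` of the real matrices. -/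
def Hset : Set PSL2C :=
  {x | ∃ g : Matrix.SpecialLinearGroup (Fin 2) ℝ,
    x = pr (Matrix.SpecialLinearGroup.map (algebraMap ℝ ℂ) g)}

/-- The upper triangular matrix `[[a, z],[0, a⁻¹]]` as an element of `SL(2,ℂ)`,
for a nonzero real `a`. -/
def tri (a : ℝ) (ha : a ≠ 0) (z : ℂ) : SL2C :=
  ⟨!![(a : ℂ), z; 0, (a : ℂ)⁻¹], by
    have h : (a : ℂ) ≠ 0 := by exact_mod_cast ha
    simp [Matrix.det_fin_two_of, mul_inv_cancel₀ h]⟩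

/-- `AN = {π [[a, z],[0, a⁻¹]] : a > 0 real, z ∈ ℂ}`. -/
def ANset : Set PSL2C := {x | ∃ (a : ℝ) (ha : 0 < a) (z : ℂ), x = pr (tri a ha.ne' z)}

/-- `AV = {π [[a, ib],[0, a⁻¹]] : a > 0 real, b ∈ ℝ}`. -/
def AVset : Set PSL2C :=
  {x | ∃ (a : ℝ) (ha : 0 < a) (b : ℝ), x = pr (tri a ha.ne' (b * Complex.I))}

/-- `A = {π diag(a, a⁻¹) : a > 0 real}`. -/
def Aset : Set PSL2C := {x | ∃ (a : ℝ) (ha : 0 < a), x = pr (tri a ha.ne' 0)}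

variable (Γ : Subgroup PSL2C)

/-- The space `Γ\\G` of right cosets `Γg`, with the quotient topology. -/
abbrev XΓ := Quotient (QuotientGroup.rightRel Γ)

/-- The natural projection `G → Γ\\G`. -/
def mkX (g : PSL2C) : XΓ Γ := Quotient.mk'' g

/-- The right translation action of `G` on `Γ\\G`: `(Γg₀)·g = Γ(g₀g)`. -/
def act (x : XΓ Γ) (g : PSL2C) : XΓ Γ :=
  Quotient.map' (fun h => h * g)
    (fun a b hab => by
      rw [QuotientGroup.rightRel_apply] at hab ⊢
      simpa [_root_.mul_inv_rev, mul_assoc] using hab) x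

/-- The orbit `xS = {x·s : s ∈ S}` of a point `x ∈ Γ\\G` under a subset `S ⊆ G`. -/
def orb (x : XΓ Γ) (S : Set PSL2C) : Set (XΓ Γ) := (fun s => act Γ x s) '' S

/-- `Γ` is a lattice in `G`: there is a nonzero finite Borel measure on `Γ\\G`
invariant under the right translation action of `G`. -/
def IsLattice : Prop :=
  letI : MeasurableSpace (XΓ Γ) := borel _
  ∃ μ : MeasureTheory.Measure (XΓ Γ), μ ≠ 0 ∧ MeasureTheory.IsFiniteMeasure μ ∧
    ∀ g : PSL2C, MeasureTheory.Measure.map (fun x => act Γ x g) μ = μ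


/-- The topological `limsup` of a sequence of subsets of a topological space:
the set of points `x` such that every neighborhood of `x` meets `Q n` for
infinitely many `n`. -/
def seqLimsup {α : Type*} [TopologicalSpace α] (Q : ℕ → Set α) : Set α :=
  {x | ∀ O ∈ nhds x, {n | (O ∩ Q n).Nonempty}.Infinite}


/-- A sequence `T : ℕ → Set ℝ` has accumulating renormalizations if for every
sequence `λ_n → +∞` of positive reals, the set `T_∞ = limsup_n λ_n⁻¹ T_n`
contains a sequence of nonzero elements tending to `0`, as well as a sequence
whose absolute values tend to `+∞`. -/
def HasAccumulatingRenormalizations (T : ℕ → Set ℝ) : Prop :=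
  ∀ lam : ℕ → ℝ, (∀ n, 0 < lam n) → Tendsto lam atTop atTop →
    (∃ s : ℕ → ℝ,
      (∀ k, s k ∈ seqLimsup (fun n => (fun t => (lam n)⁻¹ * t) '' T n) ∧ s k ≠ 0) ∧
      Tendsto s atTop (nhds 0)) ∧
    (∃ s : ℕ → ℝ,
      (∀ k, s k ∈ seqLimsup (fun n => (fun t => (lam n)⁻¹ * t) '' T n)) ∧
      Tendsto (fun k => |s k|) atTop atTop)

/-- A single subset `T ⊆ ℝ` has accumulating renormalizations if the constant
sequence `T_n = T` does. -/
def HasAccumulatingRenormalizationsSet (T : Set ℝ) : Prop :=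
  HasAccumulatingRenormalizations (fun _ => T)


/-- A subset `S ⊆ PSL(2,ℂ)` accumulates at `e` and at `∞`: `S ∖ {e}` contains a
sequence converging to `e`, and `S` contains a sequence eventually leaving
every compact subset. -/
def AccumulatesAtIdAndInfty (S : Set PSL2C) : Prop :=
  (∃ s : ℕ → PSL2C, (∀ k, s k ∈ S ∧ s k ≠ 1) ∧ Tendsto s atTop (nhds 1)) ∧
  (∃ s : ℕ → PSL2C, (∀ k, s k ∈ S) ∧
    ∀ K : Set PSL2C, IsCompact K → ∀ᶠ k in atTop, s k ∉ K)

/-! Every `G` near `1` in `SL(2,ℂ)` is `(1 + iZ) X` with `Z`, `X` real and `X` invertible, so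
modulo `H` on the right `u_t G` is `√(det X) (1 + i u_t Z u_{-t})`. Since `det G = 1`, `Z` has trace
zero and `det X (1 - det Z) = 1`, and `det Z` tends to `0` as `G → 1`. Trace, determinant and lower
left entry of `Z` are invariant under conjugation by `u_t`, so as soon as the upper right entry of
`u_t Z u_{-t}` converges to some `s`, its diagonal tends to `0` and `u_t G h → v_s` for suitable
`h ∈ H`.

That upper right entry is `Z₀₁ + a t + b t²` with `a = 2 Z₁₁` and `b = -Z₁₀` tending to `0`, and
`a`, `b` do not both vanish because `G ∉ VH`. At a scale where one monomial dominates the other,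
times `t` comparable to that scale move the entry into a prescribed annulus, provided the ratio of
its radii is large enough, and the nonzero renormalizations of `T` provide such times. By
compactness there is, for any prescribed inner or outer radius, an annulus containing some `s` with
`v_s` in the limsup, whence arbitrarily large and arbitrarily small `s`.
-/

section Quadratic

lemma abs_add_mem_Icc_of_two_mul_abs_le {u v : ℝ} (h : 2 * |v| ≤ |u|) :
    |u + v| ∈ Set.Icc (|u| / 2) (2 * |u|) := by
  have lower := abs_sub_abs_le_abs_sub u (-v)
  rw [abs_neg, sub_neg_eq_add] at lower
  exact ⟨by linarith, by linarith [abs_add_le u v, abs_nonneg u]⟩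

lemma abs_linear_add_quadratic_mem_Icc_of_linear_dominates {a b x w t : ℝ} (hw : 2 ≤ w)
    (hdom : |b| * x * w ^ 2 ≤ |a|) (hxt : x ≤ |t| * w) (htx : |t| ≤ x * w) :
    |a * t + b * t ^ 2| ∈ Set.Icc (|a| * x / (2 * w)) (2 * w * (|a| * x)) := by
  have : 0 < w := by linarith
  have dominated : 2 * |b * t ^ 2| ≤ |a * t| := by
    rw [abs_mul, abs_mul, abs_pow]
    calc 2 * (|b| * |t| ^ 2) = 2 * |b| * |t| * |t| := by ring
      _ ≤ w * |b| * |t| * (x * w) := by gcongr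
      _ = |b| * x * w ^ 2 * |t| := by ring
      _ ≤ |a| * |t| := by gcongr
  obtain ⟨lower, upper⟩ := abs_add_mem_Icc_of_two_mul_abs_le dominated
  rw [abs_mul] at lower upper
  constructor
  · calc |a| * x / (2 * w) ≤ |a| * (|t| * w) / (2 * w) := by gcongr
      _ = |a| * |t| / 2 := by field_simp
      _ ≤ _ := lower
  · calc _ ≤ 2 * (|a| * |t|) := upper
      _ ≤ 2 * (|a| * (x * w)) := by gcongr
      _ = 2 * w * (|a| * x) := by ring

lemma abs_linear_add_quadratic_mem_Icc_of_quadratic_dominates {a b x w t : ℝ} (hw : 2 ≤ w)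
    (hx : 0 ≤ x) (hdom : |a| * w ^ 2 ≤ |b| * x) (hxt : x ≤ |t| * w) (htx : |t| ≤ x * w) :
    |a * t + b * t ^ 2| ∈ Set.Icc (|b| * x ^ 2 / (2 * w ^ 2)) (2 * w ^ 2 * (|b| * x ^ 2)) := by
  have hw0 : 0 < w := by linarith
  have dominated : 2 * |a * t| ≤ |b * t ^ 2| := by
    have ratio : |a| * w ≤ |b| * |t| := by
      refine le_of_mul_le_mul_right ?_ hw0
      calc |a| * w * w = |a| * w ^ 2 := by ring
        _ ≤ |b| * x := hdom
        _ ≤ |b| * (|t| * w) := by gcongr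
        _ = |b| * |t| * w := by ring
    rw [abs_mul, abs_mul, abs_pow]
    calc 2 * (|a| * |t|) ≤ w * (|a| * |t|) := by gcongr
      _ = |a| * w * |t| := by ring
      _ ≤ |b| * |t| * |t| := by gcongr
      _ = |b| * |t| ^ 2 := by ring
  obtain ⟨lower, upper⟩ := abs_add_mem_Icc_of_two_mul_abs_le dominated
  rw [abs_mul, abs_pow, add_comm] at lower upper
  constructor
  · calc |b| * x ^ 2 / (2 * w ^ 2) ≤ |b| * (|t| * w) ^ 2 / (2 * w ^ 2) := by gcongr
      _ = |b| * |t| ^ 2 / 2 := by field_simp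
      _ ≤ _ := lower
  · calc _ ≤ 2 * (|b| * |t| ^ 2) := upper
      _ ≤ 2 * (|b| * (x * w) ^ 2) := by gcongr
      _ = 2 * w ^ 2 * (|b| * x ^ 2) := by ring

lemma exists_scale_of_linear_dominates {a b w l : ℝ} (hw : 2 ≤ w) (hl : 0 < l) (ha0 : a ≠ 0)
    (ha : |a| ≤ l) (h : |b| * (l * w ^ 4) ≤ a ^ 2) :
    ∃ x ≥ w, ∀ t, x ≤ |t| * w → |t| ≤ x * w →
      |a * t + b * t ^ 2| ∈ Set.Icc l (l * w ^ 11) := by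
  have hapos : 0 < |a| := abs_pos.2 ha0
  have hx : |a| * (l * w ^ 2 / |a|) = l * w ^ 2 := mul_div_cancel₀ _ hapos.ne'
  refine ⟨l * w ^ 2 / |a|, ?_, fun t hxt htx => ?_⟩
  · rw [ge_iff_le, le_div_iff₀ hapos]
    calc w * |a| ≤ w * l := by gcongr
      _ ≤ w * l * w := le_mul_of_one_le_right (by positivity) (by linarith)
      _ = l * w ^ 2 := by ring
  · have dominates : |b| * (l * w ^ 2 / |a|) * w ^ 2 ≤ |a| := by
      refine le_of_mul_le_mul_right ?_ hapos
      calc |b| * (l * w ^ 2 / |a|) * w ^ 2 * |a| = |b| * (l * w ^ 4) := by field_simp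
        _ ≤ |a| * |a| := by rwa [← sq, sq_abs]
    have bounds := abs_linear_add_quadratic_mem_Icc_of_linear_dominates hw dominates hxt htx
    rw [hx] at bounds
    refine Set.Icc_subset_Icc ?_ ?_ bounds
    · rw [le_div_iff₀ (by positivity)]
      calc l * (2 * w) ≤ l * (w * w) := by gcongr
        _ = l * w ^ 2 := by ring
    · calc 2 * w * (l * w ^ 2) ≤ w * w * (l * w ^ 2) := by gcongr
        _ = l * w ^ 4 := by ring
        _ ≤ l * w ^ 11 := by gcongr <;> linarith

lemma exists_scale_of_quadratic_dominates {a b w l : ℝ} (hw : 2 ≤ w) (hl : 0 < l)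
    (hb : |b| ≤ l) (h : a ^ 2 < |b| * (l * w ^ 4)) :
    ∃ x ≥ w, ∀ t, x ≤ |t| * w → |t| ≤ x * w →
      |a * t + b * t ^ 2| ∈ Set.Icc l (l * w ^ 11) := by
  have hbpos : 0 < |b| := pos_of_mul_pos_left ((sq_nonneg a).trans_lt h) (by positivity)
  have hx : |b| * √(l * w ^ 8 / |b|) ^ 2 = l * w ^ 8 := by
    rw [Real.sq_sqrt (by positivity), mul_div_cancel₀ _ hbpos.ne']
  refine ⟨√(l * w ^ 8 / |b|), ?_, fun t hxt htx => ?_⟩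
  · refine Real.le_sqrt_of_sq_le ?_
    rw [le_div_iff₀ hbpos]
    calc w ^ 2 * |b| ≤ w ^ 8 * l := by gcongr <;> linarith
      _ = l * w ^ 8 := mul_comm _ _
  · have dominates : |a| * w ^ 2 ≤ |b| * √(l * w ^ 8 / |b|) := by
      refine (pow_le_pow_iff_left₀ (by positivity) (by positivity) two_ne_zero).1 ?_
      calc (|a| * w ^ 2) ^ 2 = a ^ 2 * w ^ 4 := by rw [mul_pow, sq_abs]; ring
        _ ≤ |b| * (l * w ^ 4) * w ^ 4 := by gcongr
        _ = |b| * (l * w ^ 8) := by ring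
        _ = (|b| * √(l * w ^ 8 / |b|)) ^ 2 := by rw [mul_pow, sq |b|, mul_assoc, hx]
    have bounds := abs_linear_add_quadratic_mem_Icc_of_quadratic_dominates hw (Real.sqrt_nonneg _)
      dominates hxt htx
    rw [hx] at bounds
    refine Set.Icc_subset_Icc ?_ ?_ bounds
    · rw [le_div_iff₀ (by positivity)]
      calc l * (2 * w ^ 2) ≤ l * (w * w ^ 2) := by gcongr
        _ = l * w ^ 3 := by ring
        _ ≤ l * w ^ 8 := by gcongr <;> linarith
    · calc 2 * w ^ 2 * (l * w ^ 8) ≤ w * w ^ 2 * (l * w ^ 8) := by gcongr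
        _ = l * w ^ 11 := by ring

lemma exists_scale_quadratic_mem_Icc {a b w l : ℝ} (hw : 2 ≤ w) (hl : 0 < l)
    (h0 : a ≠ 0 ∨ b ≠ 0) (ha : |a| ≤ l) (hb : |b| ≤ l) :
    ∃ x ≥ w, ∀ t, x ≤ |t| * w → |t| ≤ x * w →
      |a * t + b * t ^ 2| ∈ Set.Icc l (l * w ^ 11) := by
  -- At the scale `|a| x = l w²` the linear monomial dominates by a factor `w²` exactly when
  -- `|b| l w⁴ ≤ a²`; otherwise the quadratic one does so at the scale `|b| x² = l w⁸`.
  rcases le_or_gt (|b| * (l * w ^ 4)) (a ^ 2) with h | h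
  · refine exists_scale_of_linear_dominates hw hl ?_ ha h
    rintro rfl
    have : 0 < |b| * (l * w ^ 4) := by
      have := abs_pos.2 (h0.resolve_left (not_not_intro rfl))
      positivity
    exact absurd h (by simpa using this)
  · exact exists_scale_of_quadratic_dominates hw hl hb h

end Quadratic

section Sequences

lemma exists_tendsto_atTop_eventually_of_forall_eventually {P : ℕ → ℕ → Prop}
    (h : ∀ K, ∀ᶠ n in atTop, P K n) :
    ∃ k : ℕ → ℕ, Tendsto k atTop atTop ∧ ∀ᶠ n in atTop, P (k n) n := by
  classical
  refine ⟨fun n => Nat.findGreatest (P · n) n, tendsto_atTop.2 fun K => ?_, ?_⟩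
  · filter_upwards [h K, eventually_ge_atTop K] with n hP hKn using Nat.le_findGreatest hKn hP
  · filter_upwards [h 0] with n hP using Nat.findGreatest_spec (P := (P · n)) n.zero_le hP

lemma exists_tendsto_eventually_map_eq {α β : Type*} {F : Filter α} [F.IsCountablyGenerated]
    [Nonempty α] {p : α → β} {g : ℕ → β} (hg : Tendsto g atTop (map p F)) :
    ∃ G : ℕ → α, Tendsto G atTop F ∧ ∀ᶠ n in atTop, p (G n) = g n := by
  obtain ⟨U, hU⟩ := F.exists_antitone_basis
  have lifts : ∀ K, ∀ᶠ n in atTop, ∃ x ∈ U K, p x = g n := fun K =>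
    hg (image_mem_map (hU.mem K))
  obtain ⟨k, hk, hlifts⟩ := exists_tendsto_atTop_eventually_of_forall_eventually lifts
  obtain ⟨G, hG⟩ := hlifts.choice
  refine ⟨G, ?_, hG.mono fun n hn => hn.2⟩
  refine hU.tendsto_right_iff.2 fun K _ => ?_
  filter_upwards [hG, hk.eventually_ge_atTop K] with n hn hKn using hU.antitone hKn hn.1

lemma mem_seqLimsup_iff_frequently {α : Type*} [TopologicalSpace α] {Q : ℕ → Set α} {x : α} :
    x ∈ seqLimsup Q ↔ ∀ O ∈ nhds x, ∃ᶠ n in atTop, (O ∩ Q n).Nonempty :=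
  forall₂_congr fun _ _ => Nat.frequently_atTop_iff_infinite.symm

lemma mem_seqLimsup_of_tendsto {α ι : Type*} [TopologicalSpace α] {Q : ℕ → Set α} {x : α}
    {F : Filter ι} [F.NeBot] {φ : ι → ℕ} {y : ι → α} (hφ : Tendsto φ F atTop)
    (hy : Tendsto y F (nhds x)) (hmem : ∀ᶠ j in F, y j ∈ Q (φ j)) : x ∈ seqLimsup Q := by
  refine mem_seqLimsup_iff_frequently.2 fun O hO => hφ.frequently (Eventually.frequently ?_)
  filter_upwards [hy hO, hmem] with j hjO hjQ using ⟨y j, hjO, hjQ⟩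

end Sequences

section Renormalization

/-- The part of `HasAccumulatingRenormalizations` that drives the blowup: at every sequence of
scales tending to infinity, the rescaled limsup of `T` contains a nonzero number. -/
def HasNonzeroRenormalizations (T : ℕ → Set ℝ) : Prop :=
  ∀ lam : ℕ → ℝ, (∀ n, 0 < lam n) → Tendsto lam atTop atTop →
    ∃ s ∈ seqLimsup (fun n => (fun t => (lam n)⁻¹ * t) '' T n), s ≠ 0

lemma HasAccumulatingRenormalizations.hasNonzeroRenormalizations {T : ℕ → Set ℝ}
    (hT : HasAccumulatingRenormalizations T) : HasNonzeroRenormalizations T := by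
  intro lam hpos hlam
  obtain ⟨⟨s, hs, -⟩, -⟩ := hT lam hpos hlam
  exact ⟨s 0, hs 0⟩

lemma HasNonzeroRenormalizations.frequently_exists_comparable {T : ℕ → Set ℝ}
    (hT : HasNonzeroRenormalizations T) {w x : ℕ → ℝ} (hw : Tendsto w atTop atTop)
    (hx : Tendsto x atTop atTop) :
    ∃ᶠ n in atTop, ∃ t ∈ T n, x n ≤ |t| * w n ∧ |t| ≤ x n * w n := by
  obtain ⟨s, hs, hs0⟩ := hT (fun n => max (x n) 1) (fun n => by positivity)
    (tendsto_atTop_mono (fun n => le_max_left _ _) hx)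
  have hspos : 0 < |s| := abs_pos.2 hs0
  have hO : (fun τ : ℝ => |τ|) ⁻¹' Set.Ioo (|s| / 2) (2 * |s|) ∈ nhds s :=
    continuous_abs.continuousAt.preimage_mem_nhds (Ioo_mem_nhds (by linarith) (by linarith))
  refine ((mem_seqLimsup_iff_frequently.1 hs _ hO).and_eventually
    ((hx.eventually_ge_atTop 1).and ((hw.eventually_ge_atTop (2 / |s|)).and
      (hw.eventually_ge_atTop (2 * |s|))))).mono ?_
  rintro n ⟨⟨τ, ⟨hτl, hτu⟩, t, ht, rfl⟩, hx1, hwl, hwu⟩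
  have hxpos : 0 < x n := by linarith
  simp only [max_eq_left hx1, inv_mul_eq_div, abs_div, abs_of_pos hxpos] at hτl hτu
  rw [lt_div_iff₀ hxpos] at hτl
  rw [div_lt_iff₀ hxpos] at hτu
  refine ⟨t, ht, ?_, ?_⟩
  · calc x n = |s| / 2 * x n * (2 / |s|) := by field_simp
      _ ≤ |t| * w n := by gcongr
  · calc |t| ≤ x n * (2 * |s|) := by linarith
      _ ≤ x n * w n := by gcongr

lemma HasNonzeroRenormalizations.frequently_exists_quadratic_mem_Icc {T : ℕ → Set ℝ}
    (hT : HasNonzeroRenormalizations T) {a b l w : ℕ → ℝ} (hw : Tendsto w atTop atTop)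
    (hl : ∀ n, 0 < l n) (h0 : ∀ᶠ n in atTop, a n ≠ 0 ∨ b n ≠ 0)
    (ha : ∀ᶠ n in atTop, |a n| ≤ l n) (hb : ∀ᶠ n in atTop, |b n| ≤ l n) :
    ∃ᶠ n in atTop, ∃ t ∈ T n, |a n * t + b n * t ^ 2| ∈ Set.Icc (l n) (l n * w n ^ 11) := by
  have scales : ∀ᶠ n in atTop, ∃ x ≥ w n, ∀ t, x ≤ |t| * w n → |t| ≤ x * w n →
      |a n * t + b n * t ^ 2| ∈ Set.Icc (l n) (l n * w n ^ 11) := by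
    filter_upwards [hw.eventually_ge_atTop 2, h0, ha, hb] with n hwn h0n han hbn
      using exists_scale_quadratic_mem_Icc hwn (hl n) h0n han hbn
  obtain ⟨x, hx⟩ := scales.choice
  have hxtop : Tendsto x atTop atTop := tendsto_atTop_mono' _ (hx.mono fun n hn => hn.1) hw
  refine ((hT.frequently_exists_comparable hw hxtop).and_eventually hx).mono ?_
  rintro n ⟨⟨t, ht, hxt, htx⟩, -, hxn⟩
  exact ⟨t, ht, hxn t hxt htx⟩

-- If every annulus were eventually missed, a diagonal choice of annuli whose ratio of radii tends
-- to infinity would be missed too.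
lemma HasNonzeroRenormalizations.exists_frequently_quadratic_mem_Icc {T : ℕ → Set ℝ}
    (hT : HasNonzeroRenormalizations T) {a b : ℕ → ℝ} (ha : Tendsto a atTop (nhds 0))
    (hb : Tendsto b atTop (nhds 0)) (h0 : ∀ᶠ n in atTop, a n ≠ 0 ∨ b n ≠ 0)
    {l : ℕ → ℝ} (hl : ∀ K, 0 < l K) {w : ℕ → ℝ} (hw : Tendsto w atTop atTop) :
    ∃ K, ∃ᶠ n in atTop, ∃ t ∈ T n,
      |a n * t + b n * t ^ 2| ∈ Set.Icc (l K) (l K * w K ^ 11) := by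
  by_contra! hmiss
  have missed : ∀ K, ∀ᶠ n in atTop, (∀ t ∈ T n,
      |a n * t + b n * t ^ 2| ∉ Set.Icc (l K) (l K * w K ^ 11)) ∧ |a n| ≤ l K ∧ |b n| ≤ l K := by
    intro K
    filter_upwards [hmiss K,
      (tendsto_zero_iff_abs_tendsto_zero _).1 ha |>.eventually_le_const (hl K),
      (tendsto_zero_iff_abs_tendsto_zero _).1 hb |>.eventually_le_const (hl K)]
      with n hn han hbn using ⟨hn, han, hbn⟩
  obtain ⟨k, hk, hkmissed⟩ := exists_tendsto_atTop_eventually_of_forall_eventually missed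
  exact hT.frequently_exists_quadratic_mem_Icc (hw.comp hk) (fun n => hl (k n)) h0
    (hkmissed.mono fun n hn => hn.2.1) (hkmissed.mono fun n hn => hn.2.2)
    (hkmissed.mono fun n hn ⟨t, ht, hmem⟩ => hn.1 t ht hmem)

end Renormalization

section Complexification

variable {n : Type*} [Fintype n] [DecidableEq n]

/-- A real square matrix regarded as a complex one. -/
abbrev complexify : Matrix n n ℝ →+* Matrix n n ℂ := (algebraMap ℝ ℂ).mapMatrix

/-- The real matrix `Z` with `M = (1 + iZ) Re M`, measuring how far `M` is from being real up to
real factors on the right. It is meaningful only where `Re M` is invertible. -/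
def imagSlope (M : Matrix n n ℂ) : Matrix n n ℝ :=
  M.map Complex.im * (M.map Complex.re)⁻¹

lemma complexify_re_add_I_smul_complexify_im (M : Matrix n n ℂ) :
    complexify (M.map Complex.re) + Complex.I • complexify (M.map Complex.im) = M := by
  ext i j
  simp [mul_comm Complex.I]

lemma mul_complexify_re_inv {M : Matrix n n ℂ} (h : IsUnit (M.map Complex.re).det) :
    M * complexify (M.map Complex.re)⁻¹ = 1 + Complex.I • complexify (imagSlope M) := by
  calc M * complexify (M.map Complex.re)⁻¹
      = (complexify (M.map Complex.re) + Complex.I • complexify (M.map Complex.im)) *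
          complexify (M.map Complex.re)⁻¹ := by rw [complexify_re_add_I_smul_complexify_im]
    _ = 1 + Complex.I • complexify (imagSlope M) := by
      rw [add_mul, smul_mul_assoc, ← map_mul, ← map_mul, mul_nonsing_inv _ h, map_one, imagSlope]

lemma continuousAt_imagSlope_one :
    ContinuousAt (imagSlope : Matrix n n ℂ → Matrix n n ℝ) 1 := by
  have re_one : ((1 : Matrix n n ℂ).map Complex.re) = 1 := by simp
  have hinv : ContinuousAt (Inv.inv : Matrix n n ℝ → Matrix n n ℝ)
      ((1 : Matrix n n ℂ).map Complex.re) := by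
    refine continuousAt_matrix_inv _ ?_
    rw [re_one, det_one]
    exact NormedRing.inverse_continuousAt 1
  exact (continuous_id.matrix_map Complex.continuous_im).continuousAt.mul
    (hinv.comp (f := fun M : Matrix n n ℂ => M.map Complex.re)
      (continuous_id.matrix_map Complex.continuous_re).continuousAt)

lemma imagSlope_one : imagSlope (1 : Matrix n n ℂ) = 0 := by
  have im_one : ((1 : Matrix n n ℂ).map Complex.im) = 0 := by
    ext i j
    simp [one_apply, apply_ite Complex.im]
  rw [imagSlope, im_one, zero_mul]

lemma det_one_add_I_smul_complexify (Z : Matrix (Fin 2) (Fin 2) ℝ) :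
    (1 + Complex.I • complexify Z).det = ⟨1 - Z.det, Z.trace⟩ := by
  rw [det_fin_two, det_fin_two, trace_fin_two]
  apply Complex.ext <;> simp <;> ring

end Complexification

section Shear

/-- The real counterpart of `uMat`: the matrix `[[1, t],[0, 1]]` in `SL(2,ℝ)`. -/
def shear (t : ℝ) : SL(2, ℝ) := ⟨!![1, t; 0, 1], by simp⟩

/-- The conjugate `u_t Z u_{-t}`, through which `u_t` acts on the slope of a matrix. -/
def shearConj (t : ℝ) (Z : Matrix (Fin 2) (Fin 2) ℝ) : Matrix (Fin 2) (Fin 2) ℝ :=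
  (shear t).1 * Z * (shear t)⁻¹.1

lemma map_shear (t : ℝ) : Matrix.SpecialLinearGroup.map (algebraMap ℝ ℂ) (shear t) = uMat t := by
  refine Subtype.ext ?_
  rw [Matrix.SpecialLinearGroup.map_apply_coe]
  ext i j
  fin_cases i <;> fin_cases j <;> simp [shear, uMat]

lemma coe_shear_inv (t : ℝ) : (shear t)⁻¹.1 = !![1, -t; 0, 1] := by
  rw [Matrix.SpecialLinearGroup.coe_inv, shear, adjugate_fin_two_of, neg_zero]

lemma shearConj_eq (t : ℝ) (Z : Matrix (Fin 2) (Fin 2) ℝ) :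
    shearConj t Z = !![Z 0 0 + t * Z 1 0, Z 0 1 + (Z 1 1 - Z 0 0) * t - Z 1 0 * t ^ 2;
      Z 1 0, Z 1 1 - t * Z 1 0] := by
  rw [shearConj, coe_shear_inv, shear, eta_fin_two Z]
  simp only [mul_fin_two]
  ext i j
  fin_cases i <;> fin_cases j <;> simp <;> ring

lemma shearConj_zero_one {Z : Matrix (Fin 2) (Fin 2) ℝ} (hZ : Z.trace = 0) (t : ℝ) :
    shearConj t Z 0 1 = Z 0 1 + (2 * Z 1 1 * t + -Z 1 0 * t ^ 2) := by
  rw [trace_fin_two] at hZ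
  simp only [shearConj_eq, of_apply, cons_val_zero, cons_val_one]
  linear_combination -t * hZ

lemma trace_shearConj (t : ℝ) (Z : Matrix (Fin 2) (Fin 2) ℝ) :
    (shearConj t Z).trace = Z.trace := by
  rw [shearConj_eq, trace_fin_two_of, trace_fin_two]
  ring

lemma det_shearConj (t : ℝ) (Z : Matrix (Fin 2) (Fin 2) ℝ) :
    (shearConj t Z).det = Z.det := by
  rw [shearConj, det_mul, det_mul, (shear t).2, (shear t)⁻¹.2, one_mul, mul_one]

lemma shear_mul_one_add_I_smul_mul_shear_inv (t : ℝ) (Z : Matrix (Fin 2) (Fin 2) ℝ) :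
    complexify (shear t).1 * (1 + Complex.I • complexify Z) * complexify (shear t)⁻¹.1 =
      1 + Complex.I • complexify (shearConj t Z) := by
  rw [mul_add, add_mul, mul_one, ← map_mul, ← Matrix.SpecialLinearGroup.coe_mul,
    mul_inv_cancel, Matrix.SpecialLinearGroup.coe_one, map_one, mul_smul_comm,
    smul_mul_assoc, ← map_mul, ← map_mul, shearConj]

lemma tendsto_of_trace_eq_zero_of_det {ι : Type*} {F : Filter ι}
    {W : ι → Matrix (Fin 2) (Fin 2) ℝ} {s : ℝ} (htrace : ∀ᶠ j in F, (W j).trace = 0)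
    (hdet : Tendsto (fun j => (W j).det) F (nhds 0)) (h10 : Tendsto (fun j => W j 1 0) F (nhds 0))
    (h01 : Tendsto (fun j => W j 0 1) F (nhds s)) : Tendsto W F (nhds !![0, s; 0, 0]) := by
  have sq11 : Tendsto (fun j => W j 1 1 ^ 2) F (nhds 0) := by
    have := (hdet.add (h01.mul h10)).neg
    rw [mul_zero, add_zero, neg_zero] at this
    refine this.congr' ?_
    filter_upwards [htrace] with j hj
    rw [trace_fin_two] at hj
    rw [det_fin_two]
    linear_combination -W j 1 1 * hj
  have h11 : Tendsto (fun j => W j 1 1) F (nhds 0) := by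
    rw [tendsto_zero_iff_abs_tendsto_zero]
    simpa [Function.comp_def, Real.sqrt_sq_eq_abs] using sq11.sqrt
  have h00 : Tendsto (fun j => W j 0 0) F (nhds 0) := by
    have := h11.neg
    rw [neg_zero] at this
    refine this.congr' (htrace.mono fun j hj => ?_)
    rw [trace_fin_two] at hj
    linarith
  refine tendsto_pi_nhds.2 fun i => tendsto_pi_nhds.2 fun j => ?_
  fin_cases i <;> fin_cases j
  exacts [h00, h01, h10, h11]

end Shear

section RealNormalization

/-- The scalar multiple of `(Re G)⁻¹` lying in `SL(2,ℝ)`. -/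
def realNormalizer (G : SL2C) (hG : 0 < (G.1.map Complex.re).det) : SL(2, ℝ) :=
  ⟨√(G.1.map Complex.re).det • (G.1.map Complex.re)⁻¹, by
    rw [det_smul, Fintype.card_fin, Real.sq_sqrt hG.le, det_nonsing_inv, Ring.inverse_eq_inv',
      mul_inv_cancel₀ hG.ne']⟩

variable {G : SL2C}

lemma coe_mul_map_realNormalizer (hG : 0 < (G.1.map Complex.re).det) :
    (G * Matrix.SpecialLinearGroup.map (algebraMap ℝ ℂ) (realNormalizer G hG)).1 =
      √(G.1.map Complex.re).det • (1 + Complex.I • complexify (imagSlope G.1)) := by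
  rw [← mul_complexify_re_inv hG.ne'.isUnit, ← mul_smul_comm]
  change G.1 * complexify (√(G.1.map Complex.re).det • (G.1.map Complex.re)⁻¹) = _
  congr 1
  ext i j
  simp

lemma coe_uMat_mul_mul_map (hG : 0 < (G.1.map Complex.re).det) (t : ℝ) :
    (uMat t * G *
        Matrix.SpecialLinearGroup.map (algebraMap ℝ ℂ) (realNormalizer G hG * (shear t)⁻¹)).1 =
      √(G.1.map Complex.re).det • (1 + Complex.I • complexify (shearConj t (imagSlope G.1))) := by
  rw [← shear_mul_one_add_I_smul_mul_shear_inv, ← smul_mul_assoc, ← mul_smul_comm,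
    ← coe_mul_map_realNormalizer hG, ← map_shear, map_mul, mul_assoc, ← mul_assoc G,
    ← mul_assoc (Matrix.SpecialLinearGroup.map _ (shear t))]
  rfl

lemma det_re_mul_det_one_add_I_smul (hG : 0 < (G.1.map Complex.re).det) :
    ((G.1.map Complex.re).det : ℂ) * ⟨1 - (imagSlope G.1).det, (imagSlope G.1).trace⟩ = 1 := by
  have hdet := (G * Matrix.SpecialLinearGroup.map (algebraMap ℝ ℂ) (realNormalizer G hG)).2
  rw [coe_mul_map_realNormalizer, det_smul_of_tower, det_one_add_I_smul_complexify,
    Fintype.card_fin, Real.sq_sqrt hG.le] at hdet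
  rwa [Complex.real_smul] at hdet

lemma trace_imagSlope (hG : 0 < (G.1.map Complex.re).det) : (imagSlope G.1).trace = 0 := by
  have := congrArg Complex.im (det_re_mul_det_one_add_I_smul hG)
  simpa [hG.ne'] using this

lemma det_re_eq_one (hG : 0 < (G.1.map Complex.re).det) (hdet : (imagSlope G.1).det = 0) :
    (G.1.map Complex.re).det = 1 := by
  have := congrArg Complex.re (det_re_mul_det_one_add_I_smul hG)
  simpa [hdet] using this

lemma coe_uMat_mul_I (s : ℝ) :
    (uMat (s * Complex.I)).1 = 1 + Complex.I • complexify !![0, s; 0, 0] := by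
  ext i j
  fin_cases i <;> fin_cases j <;> simp [uMat, mul_comm]

lemma pr_mem_VH_of_imagSlope (hG : 0 < (G.1.map Complex.re).det)
    (h10 : imagSlope G.1 1 0 = 0) (h11 : imagSlope G.1 1 1 = 0) :
    ∃ v ∈ Vset, ∃ h ∈ Hset, pr G = v * h := by
  have h00 : imagSlope G.1 0 0 = 0 := by
    simpa [trace_fin_two, h11] using trace_imagSlope hG
  have slope_eq : imagSlope G.1 = !![0, imagSlope G.1 0 1; 0, 0] := by
    ext i j
    fin_cases i <;> fin_cases j <;> simp [h00, h10, h11]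
  have hD := det_re_eq_one hG (by simp [det_fin_two, h10, h11])
  have factor : G * Matrix.SpecialLinearGroup.map (algebraMap ℝ ℂ) (realNormalizer G hG) =
      uMat (imagSlope G.1 0 1 * Complex.I) := by
    refine Subtype.ext ?_
    rw [coe_mul_map_realNormalizer, hD, Real.sqrt_one, one_smul, coe_uMat_mul_I, ← slope_eq]
  refine ⟨vv (imagSlope G.1 0 1), ⟨_, rfl⟩,
    pr (Matrix.SpecialLinearGroup.map (algebraMap ℝ ℂ) (realNormalizer G hG)⁻¹), ⟨_, rfl⟩, ?_⟩
  rw [vv, ← map_mul, ← factor, map_inv, mul_inv_cancel_right]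

end RealNormalization

section NearIdentity

variable {ι n : Type*} [Fintype n] [DecidableEq n] {F : Filter ι} {M : ι → Matrix n n ℂ}

lemma tendsto_det_map_re_of_tendsto_one (hM : Tendsto M F (nhds 1)) :
    Tendsto (fun j => ((M j).map Complex.re).det) F (nhds 1) := by
  have hcont : Continuous fun M : Matrix n n ℂ => (M.map Complex.re).det :=
    (continuous_id.matrix_map Complex.continuous_re).matrix_det
  simpa [Function.comp_def] using (hcont.tendsto 1).comp hM

lemma tendsto_imagSlope_of_tendsto_one (hM : Tendsto M F (nhds 1)) :
    Tendsto (fun j => imagSlope (M j)) F (nhds 0) := by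
  simpa only [imagSlope_one, Function.comp_def] using continuousAt_imagSlope_one.tendsto.comp hM

variable {G : ι → SL2C}

lemma tendsto_shearConj_imagSlope (hG : Tendsto G F (nhds 1)) {t : ι → ℝ} {s : ℝ}
    (hs : Tendsto (fun j => shearConj (t j) (imagSlope (G j).1) 0 1) F (nhds s)) :
    Tendsto (fun j => shearConj (t j) (imagSlope (G j).1)) F (nhds !![0, s; 0, 0]) := by
  have hG' : Tendsto (fun j => (G j).1) F (nhds 1) := tendsto_subtype_rng.1 hG
  have slope := tendsto_imagSlope_of_tendsto_one hG'
  refine tendsto_of_trace_eq_zero_of_det ?_ ?_ ?_ hs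
  · filter_upwards [(tendsto_det_map_re_of_tendsto_one hG').eventually_const_lt one_pos] with j hj
    rw [trace_shearConj, trace_imagSlope hj]
  · simpa [det_shearConj, Function.comp_def] using (continuous_id.matrix_det.tendsto 0).comp slope
  · simpa [shearConj_eq, Function.comp_def] using
      ((continuous_id.matrix_elem 1 0).tendsto 0).comp slope

lemma exists_tendsto_uMat_mul_mul_map [F.NeBot] (hG : Tendsto G F (nhds 1)) {t : ι → ℝ} {s : ℝ}
    (hs : Tendsto (fun j => shearConj (t j) (imagSlope (G j).1) 0 1) F (nhds s)) :
    ∃ h : ι → SL(2, ℝ), Tendsto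
      (fun j => uMat (t j) * G j * Matrix.SpecialLinearGroup.map (algebraMap ℝ ℂ) (h j)) F
      (nhds (uMat (s * Complex.I))) := by
  have det_re := tendsto_det_map_re_of_tendsto_one (tendsto_subtype_rng.1 hG)
  have normalizable : ∀ᶠ j in F, ∃ h : SL(2, ℝ),
      (uMat (t j) * G j * Matrix.SpecialLinearGroup.map (algebraMap ℝ ℂ) h).1 =
        √((G j).1.map Complex.re).det •
          (1 + Complex.I • complexify (shearConj (t j) (imagSlope (G j).1))) :=
    (det_re.eventually_const_lt one_pos).mono fun j hj => ⟨_, coe_uMat_mul_mul_map hj (t j)⟩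
  obtain ⟨h, hh⟩ := normalizable.choice
  refine ⟨h, tendsto_subtype_rng.2 (Tendsto.congr' (hh.mono fun j hj => hj.symm) ?_)⟩
  have complexified : Tendsto
      (fun j => complexify (shearConj (t j) (imagSlope (G j).1))) F
      (nhds (complexify !![0, s; 0, 0])) :=
    ((continuous_id.matrix_map Complex.continuous_ofReal).tendsto _).comp
      (tendsto_shearConj_imagSlope hG hs)
  have := det_re.sqrt.smul ((complexified.const_smul Complex.I).const_add 1)
  rwa [Real.sqrt_one, one_smul, ← coe_uMat_mul_I] at this

end NearIdentity

section Projection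

lemma continuous_pr : Continuous pr := continuous_quot_mk

lemma isOpenMap_pr : IsOpenMap pr := by
  have : IsTopologicalGroup SL2C := Matrix.SpecialLinearGroup.topologicalGroup
  exact QuotientGroup.isOpenMap_coe

lemma exists_tendsto_one_eventually_pr_eq {g : ℕ → PSL2C} (hg : Tendsto g atTop (nhds 1)) :
    ∃ G : ℕ → SL2C, Tendsto G atTop (nhds 1) ∧ ∀ᶠ n in atTop, pr (G n) = g n := by
  have : FirstCountableTopology (Matrix (Fin 2) (Fin 2) ℂ) :=
    inferInstanceAs (FirstCountableTopology (Fin 2 → Fin 2 → ℂ))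
  have : FirstCountableTopology SL2C := TopologicalSpace.Subtype.firstCountableTopology _
  refine exists_tendsto_eventually_map_eq (hg.mono_right ?_)
  simpa only [map_one] using isOpenMap_pr.nhds_le 1

lemma continuous_vv : Continuous vv := by
  have entries : Continuous fun s : ℝ => !![1, s * Complex.I; 0, 1] := by fun_prop
  exact continuous_pr.comp (entries.subtype_mk _)

lemma vv_zero : vv 0 = 1 := by
  have : uMat ((0 : ℝ) * Complex.I) = 1 := Subtype.ext (by simp [uMat, one_fin_two])
  rw [vv, this, map_one]

/-- The modulus of the upper right entry of a matrix representing an element of `PSL(2,ℂ)`, well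
defined because the representative is unique up to sign. It recovers `|s|` from `vv s`. -/
def upperRightNorm : PSL2C → ℝ :=
  Quotient.lift (fun M : SL2C => ‖M.1 0 1‖) fun M N hMN => by
    obtain ⟨r, hr, hscalar⟩ :=
      Matrix.SpecialLinearGroup.mem_center_iff.1 (QuotientGroup.leftRel_apply.1 hMN)
    have norm_r : ‖r‖ = 1 := Complex.norm_eq_one_of_pow_eq_one hr (by simp)
    have hN : N.1 = M.1 * scalar (Fin 2) r := by
      rw [hscalar, ← Matrix.SpecialLinearGroup.coe_mul, mul_inv_cancel_left]
    simp [hN, norm_r]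

lemma continuous_upperRightNorm : Continuous upperRightNorm :=
  Continuous.quotient_lift ((continuous_subtype_val.matrix_elem 0 1).norm) _

lemma upperRightNorm_vv (s : ℝ) : upperRightNorm (vv s) = |s| := by
  change ‖(uMat (s * Complex.I)).1 0 1‖ = |s|
  simp [uMat]

lemma accumulatesAtIdAndInfty_Vset_inter {S : Set PSL2C}
    (small : ∀ ε > 0, ∃ s, 0 < |s| ∧ |s| ≤ ε ∧ vv s ∈ S) (large : ∀ R, ∃ s, R ≤ |s| ∧ vv s ∈ S) :
    AccumulatesAtIdAndInfty (Vset ∩ S) := by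
  constructor
  · choose s hpos hle hmem using fun k : ℕ => small (1 / (k + 1)) Nat.one_div_pos_of_nat
    refine ⟨fun k => vv (s k), fun k => ⟨⟨⟨_, rfl⟩, hmem k⟩, fun h => ?_⟩, ?_⟩
    · have := congrArg upperRightNorm (h.trans vv_zero.symm)
      rw [upperRightNorm_vv, upperRightNorm_vv, abs_zero] at this
      exact (hpos k).ne' this
    · have hs : Tendsto s atTop (nhds 0) :=
        squeeze_zero_norm hle tendsto_one_div_add_atTop_nhds_zero_nat
      rw [← vv_zero]
      exact (continuous_vv.tendsto 0).comp hs
  · choose s hle hmem using fun k : ℕ => large k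
    refine ⟨fun k => vv (s k), fun k => ⟨⟨_, rfl⟩, hmem k⟩, fun K hK => ?_⟩
    obtain ⟨R, hR⟩ := hK.bddAbove_image continuous_upperRightNorm.continuousOn
    filter_upwards [tendsto_natCast_atTop_atTop.eventually_gt_atTop R] with k hk hkK
    have := hR (Set.mem_image_of_mem _ hkK)
    rw [upperRightNorm_vv] at this
    linarith [hle k]

end Projection

section Blowup

variable {T : ℕ → Set ℝ} {g : ℕ → PSL2C}

/-- The set `{u_t g h : t ∈ T, h ∈ H}` swept out by `g` under `U` (at the times `T`) and `H`. -/
def unipotentSweep (T : Set ℝ) (g : PSL2C) : Set PSL2C :=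
  {x | ∃ t ∈ T, ∃ h ∈ Hset, x = uu t * g * h}

lemma vv_mem_seqLimsup_unipotentSweep {ι : Type*} {F : Filter ι} [F.NeBot] {φ : ι → ℕ}
    {G : ι → SL2C} {t : ι → ℝ} {s : ℝ} (hφ : Tendsto φ F atTop) (hG : Tendsto G F (nhds 1))
    (lift : ∀ᶠ j in F, pr (G j) = g (φ j)) (ht : ∀ᶠ j in F, t j ∈ T (φ j))
    (hs : Tendsto (fun j => shearConj (t j) (imagSlope (G j).1) 0 1) F (nhds s)) :
    vv s ∈ seqLimsup fun n => unipotentSweep (T n) (g n) := by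
  obtain ⟨h, hh⟩ := exists_tendsto_uMat_mul_mul_map hG hs
  refine mem_seqLimsup_of_tendsto hφ ((continuous_pr.tendsto _).comp hh) ?_
  filter_upwards [lift, ht] with j hj htj
  refine ⟨t j, htj, _, ⟨h j, rfl⟩, ?_⟩
  rw [Function.comp_apply, map_mul, map_mul, hj, uu]

lemma exists_vv_mem_seqLimsup_abs_mem_Icc (hT : HasNonzeroRenormalizations T)
    (hconv : Tendsto g atTop (nhds 1))
    (hg : ∀ᶠ n in atTop, g n ∉ {x | ∃ v ∈ Vset, ∃ h ∈ Hset, x = v * h})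
    {l : ℕ → ℝ} (hl : ∀ K, 0 < l K) :
    ∃ (K : ℕ) (s : ℝ), |s| ∈ Set.Icc (l K) (l K * (K + 2) ^ 11) ∧
      vv s ∈ seqLimsup fun n => unipotentSweep (T n) (g n) := by
  obtain ⟨G, hG, lift⟩ := exists_tendsto_one_eventually_pr_eq hconv
  have hG' : Tendsto (fun n => (G n).1) atTop (nhds 1) := tendsto_subtype_rng.1 hG
  have det_re_pos := (tendsto_det_map_re_of_tendsto_one hG').eventually_const_lt one_pos
  have entry (i j : Fin 2) : Tendsto (fun n => imagSlope (G n).1 i j) atTop (nhds 0) :=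
    (continuous_id.matrix_elem i j).tendsto 0 |>.comp (tendsto_imagSlope_of_tendsto_one hG')
  have nonzero : ∀ᶠ n in atTop, 2 * imagSlope (G n).1 1 1 ≠ 0 ∨ -imagSlope (G n).1 1 0 ≠ 0 := by
    filter_upwards [det_re_pos, lift, hg] with n hD hn hgn
    by_contra! h
    exact hgn (hn ▸ pr_mem_VH_of_imagSlope hD (by simpa using h.2) (by simpa using h.1))
  have two_mul_entry : Tendsto (fun n => 2 * imagSlope (G n).1 1 1) atTop (nhds 0) := by
    simpa using (entry 1 1).const_mul 2
  have neg_entry : Tendsto (fun n => -imagSlope (G n).1 1 0) atTop (nhds 0) := by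
    simpa using (entry 1 0).neg
  obtain ⟨K, hK⟩ := hT.exists_frequently_quadratic_mem_Icc two_mul_entry neg_entry nonzero hl
    (tendsto_atTop_add_const_right _ 2 tendsto_natCast_atTop_atTop)
  obtain ⟨φ, hφ, hφK⟩ := extraction_of_frequently_atTop hK
  choose t ht hmem using hφK
  obtain ⟨s, -, ψ, hψ, hs⟩ := (isCompact_closedBall (0 : ℝ) (l K * (K + 2) ^ 11)).tendsto_subseq
    fun j => mem_closedBall_zero_iff.2 (hmem j).2
  have hφψ : Tendsto (φ ∘ ψ) atTop atTop := hφ.tendsto_atTop.comp hψ.tendsto_atTop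
  refine ⟨K, s, isClosed_Icc.mem_of_tendsto hs.abs (.of_forall fun j => hmem _),
    vv_mem_seqLimsup_unipotentSweep hφψ (hG.comp hφψ) (hφψ.eventually lift)
      (.of_forall fun j => ht (ψ j)) ?_⟩
  have corner := ((entry 0 1).comp hφψ).add hs
  rw [zero_add] at corner
  refine corner.congr' ?_
  filter_upwards [hφψ.eventually det_re_pos] with j hj
  exact (shearConj_zero_one (trace_imagSlope hj) _).symm

theorem refined_unipotent_blowup_VH_general (hT : HasNonzeroRenormalizations T)
    (hconv : Tendsto g atTop (nhds 1))
    (hg : ∀ᶠ n in atTop, g n ∉ {x | ∃ v ∈ Vset, ∃ h ∈ Hset, x = v * h}) :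
    AccumulatesAtIdAndInfty
      (Vset ∩ seqLimsup (fun n => {x | ∃ t ∈ T n, ∃ h ∈ Hset, x = uu t * g n * h})) := by
  refine accumulatesAtIdAndInfty_Vset_inter (fun ε hε => ?_) (fun R => ?_)
  · have hl (K : ℕ) : 0 < ε / ((K : ℝ) + 2) ^ 11 := by positivity
    obtain ⟨K, s, hs, hmem⟩ := exists_vv_mem_seqLimsup_abs_mem_Icc hT hconv hg hl
    rw [div_mul_cancel₀ _ (by positivity)] at hs
    exact ⟨s, (hl K).trans_le hs.1, hs.2, hmem⟩
  · obtain ⟨_, s, hs, hmem⟩ := exists_vv_mem_seqLimsup_abs_mem_Icc hT hconv hg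
      (l := fun _ => max R 1) (fun _ => by positivity)
    exact ⟨s, (le_max_left R 1).trans hs.1, hmem⟩

end Blowup

/-- Refined unipotent blowup: if `(T_n)` has accumulating renormalizations and
`g_n → e` in `G - VH`, then `V ∩ limsup_n {u_t g_n h : t ∈ T_n, h ∈ H}`
accumulates at `e` and at `∞`. -/
theorem refined_unipotent_blowup_VH
    (T : ℕ → Set ℝ) (hT : HasAccumulatingRenormalizations T)
    (g : ℕ → PSL2C) (hconv : Tendsto g atTop (nhds 1))
    (hg : ∀ n, g n ∉ {x | ∃ v ∈ Vset, ∃ h ∈ Hset, x = v * h}) :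
    AccumulatesAtIdAndInfty
      (Vset ∩ seqLimsup (fun n => {x | ∃ t ∈ T n, ∃ h ∈ Hset, x = uu t * g n * h})) :=
  refined_unipotent_blowup_VH_general hT.hasNonzeroRenormalizations hconv (.of_forall hg)

end
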